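/- Let 0 < α < 1/2 and let θ : ℝ → ℝ be a smooth 1-periodic function with ∫_0^1 θ(x) dx ≠ 0. Then for every dyadic rational y₁ = j/2^m in (0,1) (with integers m ≥ 1 and 1 ≤ j ≤ 2^m − 1), one has limsup_{n → ∞} 2^n | U(y₁ + 2^{−n};θ) − U(y₁;θ) | = +∞; consequently the function y ↦ U(y;θ) is not differentiable at y₁, so it fails to be differentiable at a dense set of points of [0,1]. -/

import Mathlib

open Real Filter

/-- The second component of the Weierstrass flow. -/
noncomputable def weierstrassU2 (α x y : ℝ) : ℝ :=
  ∑' k : ℕ, (2 : ℝ) ^ (-(α * (k : ℝ))) * Real.cos (2 ^ k * π * x) * Real.sin (2 ^ k * π * y)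

/-- `U(y;θ) = ∫_0^1 u₂(x,y)² θ(x) dx`. -/
noncomputable def weierstrassU (α : ℝ) (θ : ℝ → ℝ) (y : ℝ) : ℝ :=
  ∫ x in (0 : ℝ)..1, (weierstrassU2 α x y) ^ 2 * θ x

/-!
The modes `cos (2 ^ k π x)` are almost orthogonal for the weight `θ`: their Gram matrix differs from
`(∫ θ) / 2` times the identity by `O(1 / (2 ^ k + 2 ^ l))`, because the cosine integrals of `θ`
decay like the inverse of the frequency. The factor `sin (2 ^ k π y) * sin (2 ^ l π y)` multiplying
the `(k, l)` entry in the expansion of `U` has Lipschitz constant `(2 ^ k + 2 ^ l) π`, which this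
decay exactly compensates. Hence, up to a Lipschitz function, `U` is `(∫ θ) / 2` times
`E y = ∑ 4 ^ (-α k) sin² (2 ^ k π y)`. At a dyadic point all but finitely many terms of `E` vanish,
so `E` is minimal there up to finitely many smooth terms, while moving by `2 ^ (-n)` switches the
term `k = n - 1` fully on. Thus `E` grows by at least `4 ^ (-α (n - 1)) - O(2 ^ (-n))`, which is
much larger than `2 ^ (-n)` when `α < 1 / 2`.
-/

open MeasureTheory

section DifferenceQuotients

variable {ι : Type*} {l : Filter ι} {c : ι → ℝ} {x : ℝ}

lemma not_differentiableAt_of_tendsto_mul_norm_sub_atTop {F : Type*} [NormedAddCommGroup F]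
    [NormedSpace ℝ F] [l.NeBot] {f : ℝ → F} (hc : Tendsto c l atTop)
    (hf : Tendsto (fun i => c i * ‖f (x + (c i)⁻¹) - f x‖) l atTop) :
    ¬DifferentiableAt ℝ f x := by
  intro hd
  have hlim := (hd.hasFDerivAt.lim 1 (tendsto_norm_atTop_atTop.comp hc)).norm
  refine not_tendsto_nhds_of_tendsto_atTop hf _ (hlim.congr' ?_)
  filter_upwards [hc.eventually_ge_atTop 0] with i hi
  rw [norm_smul, smul_eq_mul, mul_one, norm_of_nonneg hi]

lemma tendsto_mul_abs_sub_atTop_of_lipschitzWith_sub {f g : ℝ → ℝ} {a : ℝ} {K : NNReal}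
    (hfg : LipschitzWith K fun y => f y - a * g y) (ha : a ≠ 0) (hc : Tendsto c l atTop)
    (hg : Tendsto (fun i => c i * (g (x + (c i)⁻¹) - g x)) l atTop) :
    Tendsto (fun i => c i * |f (x + (c i)⁻¹) - f x|) l atTop := by
  have hlower : Tendsto (fun i => |a| * (c i * (g (x + (c i)⁻¹) - g x)) - K) l atTop :=
    tendsto_atTop_add_const_right _ _ (hg.const_mul_atTop (abs_pos.2 ha))
  refine tendsto_atTop_mono' _ ?_ hlower
  filter_upwards [hc.eventually_gt_atTop 0] with i hi
  set Δf := f (x + (c i)⁻¹) - f x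
  set Δg := g (x + (c i)⁻¹) - g x
  have hlip : |Δf - a * Δg| ≤ K * (c i)⁻¹ := by
    have h := hfg.dist_le_mul (x + (c i)⁻¹) x
    rw [dist_eq, dist_eq, add_sub_cancel_left, abs_of_pos (inv_pos.2 hi)] at h
    convert h using 2
    ring
  have hΔ : |a| * Δg - K * (c i)⁻¹ ≤ |Δf| := calc
    |a| * Δg - K * (c i)⁻¹ ≤ |a * Δg| - |Δf - a * Δg| := by
      rw [abs_mul]
      gcongr
      exact le_abs_self Δg
    _ ≤ |Δf| := by
      rw [abs_sub_comm, sub_le_iff_le_add]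
      simpa using abs_add_le Δf (a * Δg - Δf)
  calc |a| * (c i * Δg) - K = c i * (|a| * Δg - K * (c i)⁻¹) := by field_simp
    _ ≤ c i * |Δf| := by gcongr

end DifferenceQuotients

lemma hasSum_ite_diag {ι M : Type*} [DecidableEq ι] [AddCommMonoid M] [TopologicalSpace M]
    {f : ι → M} {s : M} (hf : HasSum f s) :
    HasSum (fun p : ι × ι => if p.1 = p.2 then f p.1 else 0) s := by
  have hinj : Function.Injective fun i : ι => (i, i) := fun _ _ h => congrArg Prod.fst h
  refine (hinj.hasSum_iff ?_).1 (by simpa [Function.comp_def] using hf)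
  rintro ⟨i, j⟩ hp
  exact if_neg fun h => hp ⟨i, Prod.ext rfl h⟩

lemma two_pow_add_two_pow_le_three_mul_abs_sub {k l : ℕ} (hkl : k ≠ l) :
    (2 : ℝ) ^ k + 2 ^ l ≤ 3 * |2 ^ k - 2 ^ l| := by
  wlog h : k < l generalizing k l
  · rw [add_comm, abs_sub_comm]
    exact this hkl.symm (by omega)
  have hpow : (2 : ℝ) ^ k * 2 ≤ 2 ^ l := by
    rw [← pow_succ]
    exact pow_le_pow_right₀ one_le_two h
  linarith [neg_le_abs ((2 : ℝ) ^ k - 2 ^ l)]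

lemma abs_sin_mul_sin_sub_le (a b y z : ℝ) :
    |sin (a * y) * sin (b * y) - sin (a * z) * sin (b * z)| ≤ (|a| + |b|) * |y - z| := by
  have hlip (c : ℝ) : |sin (c * y) - sin (c * z)| ≤ |c| * |y - z| := by
    rw [← abs_mul, mul_sub]
    exact abs_sin_sub_sin_le _ _
  calc |sin (a * y) * sin (b * y) - sin (a * z) * sin (b * z)|
      = |(sin (a * y) - sin (a * z)) * sin (b * y)
          + sin (a * z) * (sin (b * y) - sin (b * z))| := by ring_nf
    _ ≤ |sin (a * y) - sin (a * z)| * |sin (b * y)|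
          + |sin (a * z)| * |sin (b * y) - sin (b * z)| := by
        simp only [← abs_mul]
        exact abs_add_le _ _
    _ ≤ |a| * |y - z| * 1 + 1 * (|b| * |y - z|) := by
        gcongr
        exacts [hlip a, abs_sin_le_one _, abs_sin_le_one _, hlip b]
    _ = (|a| + |b|) * |y - z| := by ring

lemma exists_abs_integral_cos_mul_mul_abs_le {θ : ℝ → ℝ} {a b : ℝ}
    (hθ : AbsolutelyContinuousOnInterval θ a b) :
    ∃ B, ∀ w, |∫ x in a..b, cos (w * x) * θ x| * |w| ≤ B := by
  refine ⟨|θ b| + |θ a| + |∫ x in a..b, (|deriv θ x|)|, fun w => ?_⟩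
  have hderiv (x : ℝ) : deriv (fun x => sin (w * x)) x = cos (w * x) * w := by
    simpa using (((hasDerivAt_id x).const_mul w).sin).deriv
  have hsin : AbsolutelyContinuousOnInterval (fun x => sin (w * x)) a b :=
    ContDiffOn.absolutelyContinuousOnInterval (ContDiff.contDiffOn (by fun_prop))
  have hparts : (∫ x in a..b, cos (w * x) * θ x) * w
      = θ b * sin (w * b) - θ a * sin (w * a) - ∫ x in a..b, deriv θ x * sin (w * x) := by
    rw [← hθ.integral_mul_deriv_eq_deriv_mul hsin, ← intervalIntegral.integral_mul_const]
    simp only [hderiv]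
    congr 1 with x
    ring
  have hboundary (x : ℝ) : |θ x * sin (w * x)| ≤ |θ x| := by
    rw [abs_mul]
    exact mul_le_of_le_one_right (abs_nonneg _) (abs_sin_le_one _)
  have hremainder : |∫ x in a..b, deriv θ x * sin (w * x)| ≤ |∫ x in a..b, (|deriv θ x|)| := by
    rw [← norm_eq_abs]
    refine intervalIntegral.norm_integral_le_abs_of_norm_le
      (Eventually.of_forall fun x => ?_) hθ.intervalIntegrable_deriv.abs
    rw [norm_eq_abs, abs_mul]
    exact mul_le_of_le_one_right (abs_nonneg _) (abs_sin_le_one _)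
  rw [← abs_mul, hparts]
  calc _ ≤ |θ b * sin (w * b)| + |θ a * sin (w * a)|
          + |∫ x in a..b, deriv θ x * sin (w * x)| :=
        (abs_sub _ _).trans (add_le_add_left (abs_sub _ _) _)
    _ ≤ _ := add_le_add (add_le_add (hboundary b) (hboundary a)) hremainder

/-- The Gram matrix of the modes `cos (2 ^ k π x)` on `[0, 1]` with respect to the weight `θ`. It
is the coefficient matrix of `U(·;θ)` as a quadratic form in the `y`-modes. -/
noncomputable def cosGram (θ : ℝ → ℝ) (k l : ℕ) : ℝ :=
  ∫ x in (0 : ℝ)..1, cos (2 ^ k * π * x) * cos (2 ^ l * π * x) * θ x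

section CosGram

variable {θ : ℝ → ℝ}

lemma cosGram_eq (hθ : IntervalIntegrable θ volume 0 1) (k l : ℕ) :
    cosGram θ k l = ((∫ x in (0 : ℝ)..1, cos ((2 ^ k * π - 2 ^ l * π) * x) * θ x)
      + ∫ x in (0 : ℝ)..1, cos ((2 ^ k * π + 2 ^ l * π) * x) * θ x) / 2 := by
  have hint (w : ℝ) : IntervalIntegrable (fun x => cos (w * x) * θ x) volume 0 1 :=
    hθ.continuousOn_mul (by fun_prop)
  rw [← intervalIntegral.integral_add (hint _) (hint _), ← intervalIntegral.integral_div]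
  refine intervalIntegral.integral_congr fun x _ => ?_
  simp only [sub_mul, add_mul, cos_sub, cos_add]
  ring

lemma exists_abs_cosGram_sub_mul_le (hθ : AbsolutelyContinuousOnInterval θ 0 1) :
    ∃ B, ∀ k l : ℕ, |cosGram θ k l - if k = l then (∫ x in (0 : ℝ)..1, θ x) / 2 else 0|
      * (2 ^ k * π + 2 ^ l * π) ≤ B := by
  obtain ⟨B, hB⟩ := exists_abs_integral_cos_mul_mul_abs_le hθ
  have hB0 : 0 ≤ B := by simpa using hB 0
  refine ⟨2 * B, fun k l => ?_⟩
  rw [cosGram_eq hθ.continuousOn.intervalIntegrable]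
  have hsum := hB (2 ^ k * π + 2 ^ l * π)
  have hdiff := hB (2 ^ k * π - 2 ^ l * π)
  rw [abs_of_pos (a := 2 ^ k * π + 2 ^ l * π) (by positivity)] at hsum
  set I := ∫ x in (0 : ℝ)..1, cos ((2 ^ k * π + 2 ^ l * π) * x) * θ x
  split_ifs with hkl
  · subst hkl
    simp only [sub_self, zero_mul, cos_zero, one_mul]
    rw [add_div, add_sub_cancel_left, abs_div, abs_two]
    linarith
  · set J := ∫ x in (0 : ℝ)..1, cos ((2 ^ k * π - 2 ^ l * π) * x) * θ x
    have hfreq : 2 ^ k * π + 2 ^ l * π ≤ 3 * |2 ^ k * π - 2 ^ l * π| := by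
      rw [← sub_mul, ← add_mul, abs_mul, abs_of_pos pi_pos, ← mul_assoc]
      gcongr
      exact two_pow_add_two_pow_le_three_mul_abs_sub hkl
    have hJ : |J| * (2 ^ k * π + 2 ^ l * π) ≤ 3 * B := calc
      |J| * (2 ^ k * π + 2 ^ l * π) ≤ |J| * (3 * |2 ^ k * π - 2 ^ l * π|) := by gcongr
      _ ≤ 3 * B := by linarith
    calc |(J + I) / 2 - 0| * (2 ^ k * π + 2 ^ l * π)
        ≤ (|J| + |I|) / 2 * (2 ^ k * π + 2 ^ l * π) := by
          rw [sub_zero, abs_div, abs_two]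
          gcongr
          exact abs_add_le J I
      _ ≤ 2 * B := by linarith

end CosGram

/-- The amplitude `2 ^ (-α k)` of the `k`-th mode of the Weierstrass flow. -/
noncomputable def weierstrassAmplitude (α : ℝ) (k : ℕ) : ℝ :=
  (2 : ℝ) ^ (-(α * (k : ℝ)))

/-- The `k`-th term of the series defining `u₂(x,y)`. -/
noncomputable def weierstrassMode (α x y : ℝ) (k : ℕ) : ℝ :=
  weierstrassAmplitude α k * cos (2 ^ k * π * x) * sin (2 ^ k * π * y)

/-- The diagonal part `∑ 4 ^ (-α k) sin² (2 ^ k π y)` of the double series for `U(y;θ)`,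
normalized so that its weight in `U(y;θ)` is half the mean of `θ`. -/
noncomputable def weierstrassEnergy (α y : ℝ) : ℝ :=
  ∑' k : ℕ, weierstrassAmplitude α k ^ 2 * sin (2 ^ k * π * y) ^ 2

section Expansion

variable {α : ℝ} {θ : ℝ → ℝ}

lemma weierstrassAmplitude_nonneg (α : ℝ) (k : ℕ) : 0 ≤ weierstrassAmplitude α k :=
  rpow_nonneg zero_le_two _

lemma weierstrassAmplitude_eq_pow (α : ℝ) (k : ℕ) :
    weierstrassAmplitude α k = ((2 : ℝ) ^ (-α)) ^ k := by
  rw [weierstrassAmplitude, ← neg_mul, rpow_mul_natCast zero_le_two]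

lemma summable_weierstrassAmplitude (hα : 0 < α) : Summable (weierstrassAmplitude α) := by
  rw [funext (weierstrassAmplitude_eq_pow α)]
  exact summable_geometric_of_lt_one (by positivity)
    (rpow_lt_one_of_one_lt_of_neg one_lt_two (neg_neg_of_pos hα))

lemma summable_weierstrassAmplitude_mul (hα : 0 < α) :
    Summable fun p : ℕ × ℕ => weierstrassAmplitude α p.1 * weierstrassAmplitude α p.2 :=
  (summable_weierstrassAmplitude hα).mul_of_nonneg (summable_weierstrassAmplitude hα)
    (weierstrassAmplitude_nonneg α) (weierstrassAmplitude_nonneg α)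

lemma hasSum_weierstrassEnergy (hα : 0 < α) (y : ℝ) :
    HasSum (fun k => weierstrassAmplitude α k ^ 2 * sin (2 ^ k * π * y) ^ 2)
      (weierstrassEnergy α y) := by
  refine Summable.hasSum (.of_nonneg_of_le (fun k => by positivity)
    (fun k => mul_le_of_le_one_right (sq_nonneg _) (sin_sq_le_one _)) ?_)
  simpa only [Function.comp_def, sq] using (summable_weierstrassAmplitude_mul hα).comp_injective
    (i := fun k : ℕ => (k, k)) fun _ _ h => congrArg Prod.fst h

lemma abs_weierstrassMode_le (α x y : ℝ) (k : ℕ) :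
    |weierstrassMode α x y k| ≤ weierstrassAmplitude α k := by
  rw [weierstrassMode, abs_mul, abs_mul, abs_of_nonneg (weierstrassAmplitude_nonneg α k), mul_assoc]
  exact mul_le_of_le_one_right (weierstrassAmplitude_nonneg α k)
    (mul_le_one₀ (abs_cos_le_one _) (abs_nonneg _) (abs_sin_le_one _))

lemma hasSum_weierstrassU2_sq (hα : 0 < α) (x y : ℝ) :
    HasSum (fun p : ℕ × ℕ => weierstrassMode α x y p.1 * weierstrassMode α x y p.2)
      (weierstrassU2 α x y ^ 2) := by
  have hnorm : Summable fun k => ‖weierstrassMode α x y k‖ :=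
    .of_nonneg_of_le (fun _ => norm_nonneg _) (abs_weierstrassMode_le α x y)
      (summable_weierstrassAmplitude hα)
  have hmode : HasSum (weierstrassMode α x y) (weierstrassU2 α x y) := hnorm.of_norm.hasSum
  rw [sq]
  exact hmode.mul hmode (summable_mul_of_summable_norm hnorm hnorm)

lemma integral_weierstrassMode_mul (α : ℝ) (θ : ℝ → ℝ) (y : ℝ) (k l : ℕ) :
    ∫ x in (0 : ℝ)..1, weierstrassMode α x y k * weierstrassMode α x y l * θ x
      = weierstrassAmplitude α k * weierstrassAmplitude α l * cosGram θ k l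
        * (sin (2 ^ k * π * y) * sin (2 ^ l * π * y)) := by
  rw [cosGram, ← intervalIntegral.integral_const_mul, ← intervalIntegral.integral_mul_const]
  congr 1 with x
  rw [weierstrassMode, weierstrassMode]
  ring

lemma hasSum_weierstrassU (hα : 0 < α) (hθ : IntervalIntegrable θ volume 0 1) (y : ℝ) :
    HasSum (fun p : ℕ × ℕ => weierstrassAmplitude α p.1 * weierstrassAmplitude α p.2
        * cosGram θ p.1 p.2 * (sin (2 ^ p.1 * π * y) * sin (2 ^ p.2 * π * y)))
      (weierstrassU α θ y) := by
  have hint (p : ℕ × ℕ) : IntervalIntegrable (fun x =>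
      weierstrassMode α x y p.1 * weierstrassMode α x y p.2 * θ x) volume 0 1 := by
    unfold weierstrassMode
    exact hθ.continuousOn_mul (by fun_prop)
  have hsum := intervalIntegral.hasSum_integral_of_dominated_convergence
    (fun (p : ℕ × ℕ) x => weierstrassAmplitude α p.1 * weierstrassAmplitude α p.2 * |θ x|)
    (fun p => (hint p).aestronglyMeasurable_restrict_uIoc)
    (fun p => Eventually.of_forall fun x _ => ?_)
    (Eventually.of_forall fun x _ => (summable_weierstrassAmplitude_mul hα).mul_right _)
    (by simpa only [tsum_mul_right] using hθ.abs.const_mul _)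
    (Eventually.of_forall fun x _ => (hasSum_weierstrassU2_sq hα x y).mul_right (θ x))
  · exact hsum.congr_fun fun p => (integral_weierstrassMode_mul α θ y p.1 p.2).symm
  · rw [norm_eq_abs, abs_mul, abs_mul]
    gcongr
    exacts [weierstrassAmplitude_nonneg α _, abs_weierstrassMode_le .., abs_weierstrassMode_le ..]

lemma hasSum_weierstrassU_sub_energy (hα : 0 < α) (hθ : IntervalIntegrable θ volume 0 1) (y : ℝ) :
    HasSum (fun p : ℕ × ℕ => weierstrassAmplitude α p.1 * weierstrassAmplitude α p.2
        * (cosGram θ p.1 p.2 - if p.1 = p.2 then (∫ x in (0 : ℝ)..1, θ x) / 2 else 0)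
        * (sin (2 ^ p.1 * π * y) * sin (2 ^ p.2 * π * y)))
      (weierstrassU α θ y - (∫ x in (0 : ℝ)..1, θ x) / 2 * weierstrassEnergy α y) := by
  have hsub := (hasSum_weierstrassU hα hθ y).sub (hasSum_ite_diag
    ((hasSum_weierstrassEnergy hα y).mul_left ((∫ x in (0 : ℝ)..1, θ x) / 2)))
  refine hsub.congr_fun ?_
  rintro ⟨k, l⟩
  dsimp only
  split_ifs with hkl
  · obtain rfl : k = l := hkl
    ring
  · ring

theorem exists_lipschitzWith_weierstrassU_sub_energy (hα : 0 < α)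
    (hθ : AbsolutelyContinuousOnInterval θ 0 1) :
    ∃ K, LipschitzWith K fun y =>
      weierstrassU α θ y - (∫ x in (0 : ℝ)..1, θ x) / 2 * weierstrassEnergy α y := by
  obtain ⟨B, hB⟩ := exists_abs_cosGram_sub_mul_le hθ
  refine ⟨_, LipschitzWith.of_dist_le' (K := (∑' p : ℕ × ℕ,
    weierstrassAmplitude α p.1 * weierstrassAmplitude α p.2) * B) fun y z => ?_⟩
  have hsum := hasSum_weierstrassU_sub_energy hα hθ.continuousOn.intervalIntegrable
  rw [dist_eq_norm, dist_eq, mul_assoc]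
  refine ((hsum y).sub (hsum z)).norm_le_of_bounded
    ((summable_weierstrassAmplitude_mul hα).hasSum.mul_right (B * |y - z|)) ?_
  rintro ⟨k, l⟩
  set A := weierstrassAmplitude α k * weierstrassAmplitude α l
  have hA : 0 ≤ A := mul_nonneg (weierstrassAmplitude_nonneg α k) (weierstrassAmplitude_nonneg α l)
  set δ := cosGram θ k l - if k = l then (∫ x in (0 : ℝ)..1, θ x) / 2 else 0
  rw [← mul_sub, norm_eq_abs, mul_assoc, abs_mul, abs_of_nonneg hA, abs_mul]
  refine mul_le_mul_of_nonneg_left ?_ hA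
  calc _ ≤ |δ| * ((|2 ^ k * π| + |2 ^ l * π|) * |y - z|) := by
        gcongr
        exact abs_sin_mul_sin_sub_le _ _ y z
    _ = |δ| * (2 ^ k * π + 2 ^ l * π) * |y - z| := by
        rw [abs_of_pos (a := 2 ^ k * π) (by positivity),
          abs_of_pos (a := 2 ^ l * π) (by positivity), mul_assoc]
    _ ≤ B * |y - z| := by
        gcongr
        exact hB k l

end Expansion

section Dyadic

variable {α : ℝ} {m k : ℕ}

lemma sin_two_pow_mul_pi_mul_dyadic (hk : m ≤ k) (j : ℤ) :
    sin (2 ^ k * π * (j / 2 ^ m)) = 0 := by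
  obtain ⟨d, rfl⟩ := Nat.exists_eq_add_of_le hk
  have : (2 : ℝ) ^ (m + d) * π * (j / 2 ^ m) = (2 ^ d * j : ℤ) * π := by
    push_cast
    rw [pow_add]
    field_simp
  rw [this, sin_int_mul_pi]

lemma sin_two_pow_mul_pi_mul_dyadic_add_sq (hk : m ≤ k) (j : ℤ) :
    sin (2 ^ k * π * (j / 2 ^ m + (2 ^ (k + 1))⁻¹)) ^ 2 = 1 := by
  have hshift : 2 ^ k * π * (j / 2 ^ m + (2 ^ (k + 1))⁻¹) = 2 ^ k * π * (j / 2 ^ m) + π / 2 := by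
    rw [mul_add, pow_succ]
    field_simp
  rw [hshift, sin_add_pi_div_two, cos_sq', sin_two_pow_mul_pi_mul_dyadic hk, sq, mul_zero, sub_zero]

lemma exists_le_weierstrassEnergy_dyadic_sub (hα : 0 < α) (m : ℕ) (j : ℤ) :
    ∃ C, ∀ N ≥ m, weierstrassAmplitude α N ^ 2 - C * (2 ^ (N + 1))⁻¹
      ≤ weierstrassEnergy α (j / 2 ^ m + (2 ^ (N + 1))⁻¹) - weierstrassEnergy α (j / 2 ^ m) := by
  refine ⟨∑ k ∈ Finset.range m, weierstrassAmplitude α k ^ 2 * (2 ^ k * π + 2 ^ k * π),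
    fun N hN => ?_⟩
  set y : ℝ := j / 2 ^ m with hy
  set h : ℝ := (2 ^ (N + 1))⁻¹ with hh
  have hpos : 0 < h := by positivity
  set f : ℕ → ℝ := fun k => weierstrassAmplitude α k ^ 2
    * (sin (2 ^ k * π * (y + h)) ^ 2 - sin (2 ^ k * π * y) ^ 2) with hf
  have hsum : HasSum f (weierstrassEnergy α (y + h) - weierstrassEnergy α y) := by
    simpa only [hf, mul_sub] using
      (hasSum_weierstrassEnergy hα (y + h)).sub (hasSum_weierstrassEnergy hα y)
  have hlow (k : ℕ) : -(weierstrassAmplitude α k ^ 2 * (2 ^ k * π + 2 ^ k * π) * h) ≤ f k := by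
    have hlip := abs_sin_mul_sin_sub_le (2 ^ k * π) (2 ^ k * π) (y + h) y
    rw [← sq, ← sq, add_sub_cancel_left, abs_of_pos hpos,
      abs_of_pos (a := 2 ^ k * π) (by positivity)] at hlip
    rw [mul_assoc, ← mul_neg]
    exact mul_le_mul_of_nonneg_left (neg_le_of_abs_le hlip) (sq_nonneg _)
  have hhigh (k : ℕ) (hk : m ≤ k) : 0 ≤ f k := by
    rw [hf, hy]
    dsimp only
    rw [sin_two_pow_mul_pi_mul_dyadic hk, zero_pow two_ne_zero, sub_zero]
    positivity
  have hN_term : f N = weierstrassAmplitude α N ^ 2 := by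
    simp [hf, hy, hh, sin_two_pow_mul_pi_mul_dyadic hN, sin_two_pow_mul_pi_mul_dyadic_add_sq hN]
  calc _ = f N + ∑ k ∈ Finset.range m,
          -(weierstrassAmplitude α k ^ 2 * (2 ^ k * π + 2 ^ k * π) * h) := by
        rw [hN_term, Finset.sum_neg_distrib, Finset.sum_mul, sub_eq_add_neg]
    _ ≤ f N + ∑ k ∈ Finset.range m, f k := by
        gcongr with k
        exact hlow k
    _ = ∑ k ∈ insert N (Finset.range m), f k := (Finset.sum_insert (by simpa using hN)).symm
    _ ≤ _ := sum_le_hasSum _ (fun k hk => hhigh k (not_lt.1 fun h => hk (by simp [h]))) hsum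

lemma two_pow_mul_weierstrassAmplitude_sq (α : ℝ) (n : ℕ) :
    2 ^ n * weierstrassAmplitude α n ^ 2 = ((2 : ℝ) ^ (1 - 2 * α)) ^ n := by
  rw [weierstrassAmplitude_eq_pow, ← pow_mul, mul_comm n 2, pow_mul, ← mul_pow,
    ← rpow_mul_natCast zero_le_two, sub_eq_add_neg, rpow_add two_pos, rpow_one]
  congr 3
  push_cast
  ring

theorem tendsto_two_pow_mul_weierstrassEnergy_dyadic_sub (h1 : 0 < α) (h2 : α < 1 / 2)
    (m : ℕ) (j : ℤ) : Tendsto (fun n : ℕ => (2 : ℝ) ^ n *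
      (weierstrassEnergy α (j / 2 ^ m + (2 ^ n)⁻¹) - weierstrassEnergy α (j / 2 ^ m)))
      atTop atTop := by
  obtain ⟨C, hC⟩ := exists_le_weierstrassEnergy_dyadic_sub h1 m j
  have hgeom : Tendsto (fun N : ℕ => 2 * ((2 : ℝ) ^ (1 - 2 * α)) ^ N - C) atTop atTop :=
    tendsto_atTop_add_const_right _ _ ((tendsto_pow_atTop_atTop_of_one_lt
      (one_lt_rpow one_lt_two (by linarith))).const_mul_atTop two_pos)
  rw [← tendsto_add_atTop_iff_nat 1]
  refine tendsto_atTop_mono' _ ?_ hgeom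
  filter_upwards [eventually_ge_atTop m] with N hN
  calc 2 * ((2 : ℝ) ^ (1 - 2 * α)) ^ N - C
      = 2 ^ (N + 1) * (weierstrassAmplitude α N ^ 2 - C * (2 ^ (N + 1))⁻¹) := by
        rw [← two_pow_mul_weierstrassAmplitude_sq, pow_succ]
        field_simp
        ring
    _ ≤ _ := mul_le_mul_of_nonneg_left (hC N hN) (by positivity)

end Dyadic

theorem weierstrassU_not_differentiable_dyadic_general {α : ℝ} (h1 : 0 < α) (h2 : α < 1 / 2)
    {θ : ℝ → ℝ} (hθ : AbsolutelyContinuousOnInterval θ 0 1)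
    (hmean : (∫ x in (0 : ℝ)..1, θ x) ≠ 0) (m : ℕ) (j : ℤ) :
    Tendsto (fun n : ℕ => (2 : ℝ) ^ n *
        |weierstrassU α θ (j / 2 ^ m + (2 ^ n)⁻¹) - weierstrassU α θ (j / 2 ^ m)|)
      atTop atTop
      ∧ ¬DifferentiableAt ℝ (weierstrassU α θ) (j / 2 ^ m) := by
  obtain ⟨K, hK⟩ := exists_lipschitzWith_weierstrassU_sub_energy h1 hθ
  have hpow : Tendsto (fun n : ℕ => (2 : ℝ) ^ n) atTop atTop :=
    tendsto_pow_atTop_atTop_of_one_lt one_lt_two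
  have hlim := tendsto_mul_abs_sub_atTop_of_lipschitzWith_sub hK
    (div_ne_zero hmean two_ne_zero) hpow
    (tendsto_two_pow_mul_weierstrassEnergy_dyadic_sub h1 h2 m j)
  exact ⟨hlim, not_differentiableAt_of_tendsto_mul_norm_sub_atTop hpow hlim⟩

/-- For `0 < α < 1/2` and a smooth `1`-periodic `θ` with nonzero mean, at every dyadic rational
`y₁ = j/2^m ∈ (0,1)` one has `limsup_{n→∞} 2^n |U(y₁+2^{−n};θ) − U(y₁;θ)| = +∞` (formulated as:
values exceed any bound frequently); consequently `U(·;θ)` is not differentiable at `y₁`. -/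
theorem weierstrassU_not_differentiable_dyadic (α : ℝ) (h1 : 0 < α) (h2 : α < 1 / 2)
    (θ : ℝ → ℝ) (hθ : ContDiff ℝ (⊤ : ℕ∞) θ) (hper : Function.Periodic θ 1)
    (hmean : (∫ x in (0 : ℝ)..1, θ x) ≠ 0)
    (m j : ℕ) (hm : 1 ≤ m) (hj1 : 1 ≤ j) (hj2 : j ≤ 2 ^ m - 1) :
    (∀ M : ℝ, ∃ᶠ n : ℕ in atTop,
        M < (2 : ℝ) ^ n *
          |weierstrassU α θ ((j : ℝ) / 2 ^ m + (2 : ℝ) ^ (-(n : ℝ)))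
            - weierstrassU α θ ((j : ℝ) / 2 ^ m)|)
    ∧ ¬∃ L : ℝ, HasDerivAt (weierstrassU α θ) L ((j : ℝ) / 2 ^ m) := by
  have hac : AbsolutelyContinuousOnInterval θ 0 1 :=
    (hθ.of_le (mod_cast le_top)).contDiffOn.absolutelyContinuousOnInterval
  obtain ⟨hlim, hnd⟩ := weierstrassU_not_differentiable_dyadic_general h1 h2 hac hmean m j
  simp only [rpow_neg zero_le_two, rpow_natCast]
  exact ⟨fun M => (hlim.eventually_gt_atTop M).frequently, fun ⟨_, hL⟩ => hnd hL.differentiableAt⟩
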